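/- arXiv:1109.5430 — 3 statements merged into one kernel-verified Lean document; each statement's English description precedes it below -/
import Mathlib

section
/- Suppose (i) 1 − (d−1)ν − (2K−1)dμ_B > 0 and (ii) [1 − (d−1)ν − (2K−1)dμ_B]² / (1 − (d−1)ν − (K−1)dμ_B) > ω / x_{b,min}. Then for every subset S ⊆ I1 with 0 ≤ |S| ≤ K−1, the residual r = y − P_S y, where P_S is the orthogonal projection onto the column span of the blocks {A_l : l ∈ S}, satisfies max_{l ∉ I1} ‖A_l^T r‖_2 < max_{l ∈ I1} ‖A_l^T r‖_2. Consequently, the block-OMP algorithm (which at each step selects the block index l maximizing ‖A_l^T r‖_2 of the current residual r) selects only indices from I1 throughout its first K iterations, and hence recovers the exact block-sparsity pattern. -/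
/- Setting: a measurement matrix `A ∈ ℝ^{m×n}` with `n = L·d`, partitioned into `L` column
blocks of size `m×d`; columns are indexed by pairs `(l, j)` (block `l`, position `j`). -/

noncomputable section

open Finset Matrix

/-- Euclidean (ℓ₂) norm of a finitely indexed real vector. -/
def e2norm {ι : Type*} [Fintype ι] (v : ι → ℝ) : ℝ := Real.sqrt (∑ i, v i ^ 2)

/-- Euclidean inner (dot) product of two real vectors. -/
def dotp {ι : Type*} [Fintype ι] (u v : ι → ℝ) : ℝ := ∑ i, u i * v i

/-- The `(l, j)` column of the block matrix `A` (block `l`, position `j` inside the block). -/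
def acol {m L d : ℕ} (A : Matrix (Fin m) (Fin L × Fin d) ℝ) (l : Fin L) (j : Fin d) :
    Fin m → ℝ :=
  fun i => A i (l, j)

/-- `A_lᵀ v` : correlation of the `l`-th block of `A` with a vector `v ∈ ℝ^m`. -/
def blkT {m L d : ℕ} (A : Matrix (Fin m) (Fin L × Fin d) ℝ) (l : Fin L) (v : Fin m → ℝ) :
    Fin d → ℝ :=
  fun j => dotp (acol A l j) v

/-- Spectral norm (largest singular value) `ρ(X)` of a real matrix, as the supremum of
`‖Xu‖₂ / ‖u‖₂` over nonzero `u`. -/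
def specNorm {p q : ℕ} (X : Matrix (Fin p) (Fin q) ℝ) : ℝ :=
  ⨆ u : {u : Fin q → ℝ // u ≠ 0}, e2norm (X *ᵥ u.1) / e2norm u.1

/-- The `d × d` cross-Gram matrix `A_iᵀ A_j` of two blocks of `A`. -/
def bgram {m L d : ℕ} (A : Matrix (Fin m) (Fin L × Fin d) ℝ) (i j : Fin L) :
    Matrix (Fin d) (Fin d) ℝ :=
  fun a b => dotp (acol A i a) (acol A j b)

/-- Block-coherence `μ_B = max_{i ≠ j} (1/d) ρ(A_iᵀ A_j)`. -/
def blockCoh {m L d : ℕ} (A : Matrix (Fin m) (Fin L × Fin d) ℝ) : ℝ :=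
  ⨆ p : {p : Fin L × Fin L // p.1 ≠ p.2},
    (1 / (d : ℝ)) * specNorm (bgram A p.1.1 p.1.2)

/-- Sub-coherence `ν`: the maximum of `|a_iᵀ a_j|` over pairs of distinct columns lying in the
same block of `A`. -/
def subCoh {m L d : ℕ} (A : Matrix (Fin m) (Fin L × Fin d) ℝ) : ℝ :=
  ⨆ t : {t : Fin L × Fin d × Fin d // t.2.1 ≠ t.2.2},
    |dotp (acol A t.1.1 t.1.2.1) (acol A t.1.1 t.1.2.2)|

lemma e2norm_eq {ι : Type*} [Fintype ι] (v : ι → ℝ) : e2norm v = ‖WithLp.toLp 2 v‖ := by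
  simp [e2norm, EuclideanSpace.norm_eq]

lemma e2norm_nonneg {ι : Type*} [Fintype ι] (v : ι → ℝ) : 0 ≤ e2norm v := Real.sqrt_nonneg _

lemma e2norm_sq {ι : Type*} [Fintype ι] (v : ι → ℝ) : e2norm v ^ 2 = ∑ i, v i ^ 2 :=
  Real.sq_sqrt (Finset.sum_nonneg fun _ _ => sq_nonneg _)

lemma e2norm_add_le {ι : Type*} [Fintype ι] (u v : ι → ℝ) :
    e2norm (u + v) ≤ e2norm u + e2norm v := by
  simp only [e2norm_eq, WithLp.toLp_add]
  exact norm_add_le _ _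

lemma e2norm_sum_le {ι κ : Type*} [Fintype ι] (s : Finset κ) (f : κ → ι → ℝ) :
    e2norm (∑ k ∈ s, f k) ≤ ∑ k ∈ s, e2norm (f k) := by
  simp only [e2norm_eq, WithLp.toLp_sum]
  exact norm_sum_le _ _

lemma e2norm_pos {ι : Type*} [Fintype ι] {v : ι → ℝ} (h : v ≠ 0) : 0 < e2norm v := by
  rw [e2norm_eq, norm_pos_iff]
  simpa using h

lemma dotp_le {ι : Type*} [Fintype ι] (u v : ι → ℝ) : dotp u v ≤ e2norm u * e2norm v :=
  Real.sum_mul_le_sqrt_mul_sqrt _ _ _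

lemma mulVec_le_specNorm {p q : ℕ} (X : Matrix (Fin p) (Fin q) ℝ) (u : Fin q → ℝ) :
    e2norm (X *ᵥ u) ≤ specNorm X * e2norm u := by
  by_cases hu : u = 0
  · subst hu; simp [e2norm]
  have hb : BddAbove (Set.range fun u : {u : Fin q → ℝ // u ≠ 0} =>
      e2norm (X *ᵥ u.1) / e2norm u.1) := by
    refine ⟨Real.sqrt (∑ i, ∑ j, X i j ^ 2), ?_⟩
    rintro _ ⟨⟨v, hv⟩, rfl⟩
    simp only
    rw [div_le_iff₀ (e2norm_pos hv)]
    unfold e2norm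
    have h0 : 0 ≤ ∑ i, ∑ j, X i j ^ 2 :=
      Finset.sum_nonneg fun _ _ => Finset.sum_nonneg fun _ _ => sq_nonneg _
    refine le_of_le_of_eq ?_ (Real.sqrt_mul h0 _)
    apply Real.sqrt_le_sqrt
    rw [Finset.sum_mul]
    apply Finset.sum_le_sum
    intro i _
    exact Finset.sum_mul_sq_le_sq_mul_sq Finset.univ (fun j => X i j) v
  have := le_ciSup hb ⟨u, hu⟩
  simp only at this
  rwa [div_le_iff₀ (e2norm_pos hu)] at this

lemma specNorm_nonneg {p q : ℕ} (X : Matrix (Fin p) (Fin q) ℝ) : 0 ≤ specNorm X :=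
  Real.iSup_nonneg fun _ => div_nonneg (e2norm_nonneg _) (e2norm_nonneg _)

lemma blockCoh_nonneg {m L d : ℕ} (A : Matrix (Fin m) (Fin L × Fin d) ℝ) : 0 ≤ blockCoh A :=
  Real.iSup_nonneg fun _ => mul_nonneg (by positivity) (specNorm_nonneg _)

lemma subCoh_nonneg {m L d : ℕ} (A : Matrix (Fin m) (Fin L × Fin d) ℝ) : 0 ≤ subCoh A :=
  Real.iSup_nonneg fun _ => abs_nonneg _

lemma offdiag_le {m L d : ℕ} (hd : 0 < d) (A : Matrix (Fin m) (Fin L × Fin d) ℝ)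
    {i j : Fin L} (hij : i ≠ j) (u : Fin d → ℝ) :
    e2norm (bgram A i j *ᵥ u) ≤ d * blockCoh A * e2norm u := by
  refine (mulVec_le_specNorm _ _).trans (mul_le_mul_of_nonneg_right ?_ (e2norm_nonneg _))
  have h := le_ciSup (Set.finite_range fun p : {p : Fin L × Fin L // p.1 ≠ p.2} =>
    (1 / (d : ℝ)) * specNorm (bgram A p.1.1 p.1.2)).bddAbove ⟨(i, j), hij⟩
  change (1 / (d : ℝ)) * specNorm (bgram A i j) ≤ blockCoh A at h
  have hd' : (0 : ℝ) < d := by exact_mod_cast hd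
  rw [one_div, inv_mul_le_iff₀ hd'] at h
  exact h

lemma diag_ge {m L d : ℕ} (A : Matrix (Fin m) (Fin L × Fin d) ℝ)
    (hA : ∀ l j, e2norm (acol A l j) = 1) (l : Fin L) (v : Fin d → ℝ) :
    (1 - ((d : ℝ) - 1) * subCoh A) * e2norm v ≤ e2norm (bgram A l l *ᵥ v) := by
  by_cases hv : v = 0
  · subst hv; simp [e2norm]
  have hp := e2norm_pos hv
  have hν := subCoh_nonneg A
  have hentry : ∀ a b, (if a = b then (1 + subCoh A) * v a ^ 2 else 0)
      - subCoh A * (|v a| * |v b|) ≤ v a * (bgram A l l a b * v b) := by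
    intro a b
    by_cases hab : a = b
    · subst hab
      have h1 : bgram A l l a a = 1 := by
        have := e2norm_sq (acol A l a)
        rw [hA] at this
        simp only [bgram, dotp]
        rw [← one_pow 2, this]
        exact Finset.sum_congr rfl fun _ _ => by ring
      rw [h1, abs_mul_abs_self, if_pos rfl]
      apply le_of_eq; ring
    · rw [if_neg hab]
      have h := le_ciSup (Set.finite_range fun t : {t : Fin L × Fin d × Fin d // t.2.1 ≠ t.2.2} =>
        |dotp (acol A t.1.1 t.1.2.1) (acol A t.1.1 t.1.2.2)|).bddAbove ⟨(l, a, b), hab⟩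
      change |bgram A l l a b| ≤ subCoh A at h
      have h2 : |v a * (bgram A l l a b * v b)| ≤ subCoh A * (|v a| * |v b|) := by
        rw [abs_mul, abs_mul]
        calc _ = |bgram A l l a b| * (|v a| * |v b|) := by ring
          _ ≤ _ := by gcongr
      linarith [(abs_le.1 h2).1]
  have hsum := Finset.sum_le_sum fun a (_ : a ∈ (Finset.univ : Finset (Fin d))) =>
    Finset.sum_le_sum fun b (_ : b ∈ (Finset.univ : Finset (Fin d))) => hentry a b
  have hR : (∑ a, ∑ b, v a * (bgram A l l a b * v b)) = dotp v (bgram A l l *ᵥ v) := by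
    simp only [dotp, Matrix.mulVec, dotProduct, Finset.mul_sum]
  have hL : (∑ a, ∑ b, ((if a = b then (1 + subCoh A) * v a ^ 2 else 0)
      - subCoh A * (|v a| * |v b|)))
      = (1 + subCoh A) * e2norm v ^ 2 - subCoh A * (∑ a, |v a|) ^ 2 := by
    simp only [Finset.sum_sub_distrib, Finset.sum_ite_eq, Finset.mem_univ, if_true]
    rw [e2norm_sq, Finset.mul_sum, pow_two (∑ a, |v a|), Finset.sum_mul_sum]
    simp only [Finset.mul_sum]
  rw [hR, hL] at hsum
  have hC : (∑ a, |v a|) ^ 2 ≤ d * e2norm v ^ 2 := by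
    have := sq_sum_le_card_mul_sum_sq (s := (Finset.univ : Finset (Fin d))) (f := fun a => |v a|)
    simpa [e2norm_sq] using this
  have h3 := dotp_le v (bgram A l l *ᵥ v)
  have h4 := mul_le_mul_of_nonneg_left hC hν
  refine le_of_mul_le_mul_left ?_ hp
  nlinarith

/-- **Theorem 1 (noisy block-OMP recovery).**  Under conditions (i) and (ii), for every
subset `S ⊆ I1` with `|S| ≤ K-1`, the residual `r = y - P_S y` (where `P_S y` is
characterized as the orthogonal projection of `y` onto the span of the blocks `A_l, l ∈ S`)
correlates strictly better with some block inside the support `I1` than with every block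
outside `I1`; hence block-OMP selects only indices from `I1` during its first `K`
iterations and recovers the exact block-sparsity pattern. -/
theorem stmt0 {m L d K : ℕ}
    (hm : m < L * d) (hd : 0 < d) (hK1 : 1 ≤ K)
    (A : Matrix (Fin m) (Fin L × Fin d) ℝ)
    (hA : ∀ l j, e2norm (acol A l j) = 1)
    (μB ν : ℝ) (hμB : μB = blockCoh A) (hν : ν = subCoh A)
    (x : Fin L × Fin d → ℝ)
    (I1 : Finset (Fin L))
    (hI1 : ∀ l, l ∈ I1 ↔ ∃ j, x (l, j) ≠ 0)
    (hcard : I1.card = K) (hKL : K < L)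
    (y w : Fin m → ℝ) (hy : y = A *ᵥ x + w)
    -- `w̃ = w - Pw`: `w - w̃` lies in the column span of `A_nz` and `w̃` is orthogonal to it
    (wt : Fin m → ℝ)
    (hwt1 : ∃ c : Fin L → Fin d → ℝ, ∀ i, w i - wt i = ∑ l ∈ I1, ∑ j, A i (l, j) * c l j)
    (hwt2 : ∀ l ∈ I1, ∀ j, dotp (acol A l j) wt = 0)
    -- `x̃ = x_nz + A_nz† w`: `A_nz x̃ = y - w̃` and `x̃ - x_nz` lies in the row space of `A_nz`
    (xt : Fin L → Fin d → ℝ)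
    (hxt1 : ∀ i, (∑ l ∈ I1, ∑ j, A i (l, j) * xt l j) = y i - wt i)
    (hxt2 : ∃ u : Fin m → ℝ, ∀ l ∈ I1, ∀ j, xt l j - x (l, j) = dotp (acol A l j) u)
    (ω xbmin : ℝ)
    (hω : ω = ⨆ l : Fin L, e2norm (blkT A l wt))
    (hxbmin : xbmin = ⨅ l : {l : Fin L // l ∈ I1}, e2norm (xt l.1))
    (hxbminpos : 0 < xbmin)
    -- condition (i)
    (hcond1 : 0 < 1 - ((d : ℝ) - 1) * ν - (2 * (K : ℝ) - 1) * d * μB)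
    -- condition (ii)
    (hcond2 : (1 - ((d : ℝ) - 1) * ν - (2 * (K : ℝ) - 1) * d * μB) ^ 2 /
        (1 - ((d : ℝ) - 1) * ν - ((K : ℝ) - 1) * d * μB) > ω / xbmin) :
    ∀ S : Finset (Fin L), S ⊆ I1 → S.card < K →
      ∀ PSy : Fin m → ℝ,
        (∃ c : Fin L → Fin d → ℝ, ∀ i, PSy i = ∑ l ∈ S, ∑ j, A i (l, j) * c l j) →
        (∀ l ∈ S, ∀ j, dotp (acol A l j) (fun i => y i - PSy i) = 0) →
        (⨆ l : {l : Fin L // l ∉ I1}, e2norm (blkT A l.1 (fun i => y i - PSy i))) <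
          ⨆ l : {l : Fin L // l ∈ I1}, e2norm (blkT A l.1 (fun i => y i - PSy i)) := by
  intro S hS hSK PSy ⟨c, hc⟩ _
  have hμ0 : 0 ≤ μB := hμB ▸ blockCoh_nonneg A
  have hK1' : (1 : ℝ) ≤ K := by exact_mod_cast hK1
  have hd' : (0 : ℝ) < d := by exact_mod_cast hd
  set r : Fin m → ℝ := fun i => y i - PSy i with hr
  let z : Fin L → Fin d → ℝ := fun l => if l ∈ S then xt l - c l else xt l
  have hrz : ∀ i, r i = wt i + ∑ k ∈ I1, ∑ j, A i (k, j) * z k j := by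
    intro i
    have h1 : ∑ k ∈ I1, ∑ j, A i (k, j) * z k j
        = (∑ k ∈ I1, ∑ j, A i (k, j) * xt k j) - ∑ k ∈ S, ∑ j, A i (k, j) * c k j := by
      have h2 : ∑ k ∈ S, ∑ j, A i (k, j) * c k j
          = ∑ k ∈ I1, if k ∈ S then ∑ j, A i (k, j) * c k j else 0 := by
        rw [← Finset.sum_filter, Finset.filter_mem_eq_inter, Finset.inter_eq_right.2 hS]
      rw [h2, ← Finset.sum_sub_distrib]
      refine Finset.sum_congr rfl fun k _ => ?_
      by_cases hk : k ∈ S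
      · simp [z, hk, mul_sub, Finset.sum_sub_distrib]
      · simp [z, hk]
    rw [h1, hxt1, ← hc]
    simp only [hr]; ring
  have hblk : ∀ l, blkT A l r = blkT A l wt + ∑ k ∈ I1, bgram A l k *ᵥ z k := by
    intro l
    ext a
    simp only [Pi.add_apply, Finset.sum_apply, blkT, dotp, hrz, mul_add, Finset.sum_add_distrib,
      Matrix.mulVec, dotProduct, bgram]
    congr 1
    simp only [Finset.mul_sum, Finset.sum_mul]
    rw [Finset.sum_comm]
    refine Finset.sum_congr rfl fun k _ => ?_
    rw [Finset.sum_comm]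
    refine Finset.sum_congr rfl fun j _ => Finset.sum_congr rfl fun i _ => ?_
    simp only [acol]; ring
  obtain ⟨l0, hl0, hl0S⟩ : ∃ l ∈ I1, l ∉ S :=
    Finset.exists_mem_notMem_of_card_lt_card (by omega)
  obtain ⟨ls, hls, hmax⟩ := Finset.exists_max_image I1 (fun l => e2norm (z l)) ⟨l0, hl0⟩
  set Z := e2norm (z ls) with hZ
  have hxZ : xbmin ≤ Z := by
    have h1 := ciInf_le (Set.finite_range fun l : {l : Fin L // l ∈ I1} =>
      e2norm (xt l.1)).bddBelow ⟨l0, hl0⟩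
    rw [← hxbmin] at h1
    have h2 := hmax l0 hl0
    simp only [z, if_neg hl0S] at h2
    exact h1.trans h2
  have hZ0 : 0 < Z := hxbminpos.trans_le hxZ
  -- lower bound inside the support
  have hlow : (1 - ((d : ℝ) - 1) * ν - ((K : ℝ) - 1) * d * μB) * Z ≤ e2norm (blkT A ls r) := by
    have hw0 : blkT A ls wt = 0 := by
      ext a; exact hwt2 ls hls a
    rw [hblk, hw0, zero_add, ← Finset.add_sum_erase _ _ hls]
    have h1 := diag_ge A hA ls (z ls)
    have h2 : e2norm (-∑ k ∈ I1.erase ls, bgram A ls k *ᵥ z k) ≤ ((K : ℝ) - 1) * (d * μB * Z) := by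
      have hneg : ∀ v : Fin d → ℝ, e2norm (-v) = e2norm v := by intro v; simp [e2norm]
      rw [hneg]
      refine (e2norm_sum_le _ _).trans ?_
      have := Finset.sum_le_card_nsmul (I1.erase ls) (fun k => e2norm (bgram A ls k *ᵥ z k))
        (d * μB * Z) (fun k hk => by
          rw [Finset.mem_erase] at hk
          refine (offdiag_le hd A (Ne.symm hk.1) _).trans ?_
          rw [← hμB]
          exact mul_le_mul_of_nonneg_left (hmax k hk.2) (by positivity))
      rwa [Finset.card_erase_of_mem hls, hcard, nsmul_eq_mul, Nat.cast_sub hK1, Nat.cast_one] at this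
    have h3 := e2norm_add_le (bgram A ls ls *ᵥ z ls + ∑ k ∈ I1.erase ls, bgram A ls k *ᵥ z k)
      (-∑ k ∈ I1.erase ls, bgram A ls k *ᵥ z k)
    rw [add_neg_cancel_right] at h3
    rw [← hν, ← hZ] at h1
    linarith
  have hup : ∀ l, l ∉ I1 → e2norm (blkT A l r) ≤ ω + K * (d * μB * Z) := by
    intro l hl
    rw [hblk]
    refine (e2norm_add_le _ _).trans (add_le_add ?_ ?_)
    · rw [hω]
      exact le_ciSup (Set.finite_range fun l : Fin L => e2norm (blkT A l wt)).bddAbove l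
    · refine (e2norm_sum_le _ _).trans ?_
      have := Finset.sum_le_card_nsmul I1 (fun k => e2norm (bgram A l k *ᵥ z k))
        (d * μB * Z) (fun k hk => by
          refine (offdiag_le hd A (i := l) (j := k) (fun h => hl (h.symm ▸ hk)) _).trans ?_
          rw [← hμB]
          exact mul_le_mul_of_nonneg_left (hmax k hk) (by positivity))
      rwa [hcard, nsmul_eq_mul] at this
  have hωZ : ω < (1 - ((d : ℝ) - 1) * ν - (2 * (K : ℝ) - 1) * d * μB) * Z := by
    have hdm : 0 ≤ (K : ℝ) * (d * μB) := by positivity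
    set β := 1 - ((d : ℝ) - 1) * ν - (2 * (K : ℝ) - 1) * d * μB with hβ
    set α := 1 - ((d : ℝ) - 1) * ν - ((K : ℝ) - 1) * d * μB with hα
    have hαβ : β ≤ α := by
      have : α - β = K * (d * μB) := by rw [hα, hβ]; ring
      linarith
    have h1 : β ^ 2 / α ≤ β := by
      rw [div_le_iff₀ (by linarith)]; nlinarith
    have h2 : ω / xbmin < β := lt_of_lt_of_le hcond2 h1
    rw [div_lt_iff₀ hxbminpos] at h2
    exact h2.trans_le (mul_le_mul_of_nonneg_left hxZ hcond1.le)
  obtain ⟨l1, hl1⟩ : ∃ l : Fin L, l ∉ I1 := by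
    by_contra! h
    have : I1 = Finset.univ := Finset.eq_univ_iff_forall.2 h
    rw [this, Finset.card_univ, Fintype.card_fin] at hcard
    omega
  have : Nonempty {l : Fin L // l ∉ I1} := ⟨⟨l1, hl1⟩⟩
  have hA1 : (⨆ l : {l : Fin L // l ∉ I1}, e2norm (blkT A l.1 r)) ≤ ω + K * (d * μB * Z) :=
    ciSup_le fun l => hup l.1 l.2
  have hA2 := le_ciSup (Set.finite_range fun l : {l : Fin L // l ∈ I1} =>
      e2norm (blkT A l.1 r)).bddAbove ⟨ls, hls⟩
  refine hA1.trans_lt (lt_of_lt_of_le ?_ (hlow.trans hA2))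
  nlinarith
end
end

section
/- Suppose (i) 1 − (2K−1)μ > 0 and (ii) (1 − (2K−1)μ)² / (1 − (K−1)μ) > ‖A^T w̃‖_∞ / x_min. Then for every subset S ⊆ I1 with 0 ≤ |S| ≤ K−1, the residual r = y − P_S y, where P_S is the orthogonal projection onto the span of the columns {a_i : i ∈ S}, satisfies max_{i ∉ I1} |a_i^T r| < max_{i ∈ I1} |a_i^T r|; hence OMP selects only indices from I1 throughout its first K iterations and recovers the exact sparsity pattern. -/
noncomputable section

open Finset Matrix

/-- Coherence `μ = max_{i ≠ j} |a_iᵀ a_j|` of a matrix with columns `a_1, …, a_n`. -/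
def coh {m n : ℕ} (A : Matrix (Fin m) (Fin n) ℝ) : ℝ :=
  ⨆ p : {p : Fin n × Fin n // p.1 ≠ p.2},
    |dotp (fun i => A i p.1.1) (fun i => A i p.1.2)|

set_option maxHeartbeats 2000000 in
/-- **Noisy OMP recovery (Tropp-type condition).**  Under (i) `1 - (2K-1)μ > 0` and
(ii) `(1-(2K-1)μ)²/(1-(K-1)μ) > ‖Aᵀ w̃‖_∞ / x_min`, for every subset `S ⊆ I1` with
`|S| ≤ K-1`, the residual `r = y - P_S y` (with `P_S y` the orthogonal projection of `y`
onto the span of the columns indexed by `S`) correlates strictly better with some column in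
the support `I1` than with every column outside `I1`; hence OMP selects only indices from
`I1` in its first `K` iterations and recovers the exact sparsity pattern. -/
theorem stmt2 {m n K : ℕ}
    (hmn : m < n) (hK1 : 1 ≤ K) (hKn : K < n)
    (A : Matrix (Fin m) (Fin n) ℝ)
    (hA : ∀ i, e2norm (fun r => A r i) = 1)
    (μ : ℝ) (hμ : μ = coh A)
    (x : Fin n → ℝ)
    (I1 : Finset (Fin n)) (hI1 : ∀ i, i ∈ I1 ↔ x i ≠ 0) (hcard : I1.card = K)
    (y w : Fin m → ℝ) (hy : y = A *ᵥ x + w)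
    -- `w̃ = w - Pw`: `w - w̃` lies in the span of the support columns, `w̃` is orthogonal to them
    (wt : Fin m → ℝ)
    (hwt1 : ∃ c : Fin n → ℝ, ∀ r, w r - wt r = ∑ i ∈ I1, A r i * c i)
    (hwt2 : ∀ i ∈ I1, dotp (fun r => A r i) wt = 0)
    -- `x̃ = x_nz + A_nz† w`: `A_nz x̃ = y - w̃` and `x̃ - x_nz` lies in the row space of `A_nz`
    (xt : Fin n → ℝ)
    (hxt1 : ∀ r, (∑ i ∈ I1, A r i * xt i) = y r - wt r)
    (hxt2 : ∃ u : Fin m → ℝ, ∀ i ∈ I1, xt i - x i = dotp (fun r => A r i) u)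
    (xmin : ℝ) (hxmin : xmin = ⨅ i : {i : Fin n // i ∈ I1}, |xt i.1|)
    (hxminpos : 0 < xmin)
    -- condition (i)
    (hcond1 : 0 < 1 - (2 * (K : ℝ) - 1) * μ)
    -- condition (ii)
    (hcond2 : (1 - (2 * (K : ℝ) - 1) * μ) ^ 2 / (1 - ((K : ℝ) - 1) * μ) >
        (⨆ i : Fin n, |dotp (fun r => A r i) wt|) / xmin) :
    ∀ S : Finset (Fin n), S ⊆ I1 → S.card < K →
      ∀ PSy : Fin m → ℝ,
        (∃ c : Fin n → ℝ, ∀ r, PSy r = ∑ i ∈ S, A r i * c i) →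
        (∀ i ∈ S, dotp (fun r => A r i) (fun r => y r - PSy r) = 0) →
        (⨆ i : {i : Fin n // i ∉ I1}, |dotp (fun r => A r i.1) (fun r' => y r' - PSy r')|) <
          ⨆ i : {i : Fin n // i ∈ I1}, |dotp (fun r => A r i.1) (fun r' => y r' - PSy r')| := by
  classical
  intro S hSI hSK PSy hP _
  obtain ⟨c, hc⟩ := hP
  have hK1' : (1:ℝ) ≤ K := by exact_mod_cast hK1
  have hμ0 : 0 ≤ μ := by
    rw [hμ]; exact Real.iSup_nonneg fun _ => abs_nonneg _
  have hcoh : ∀ i j, i ≠ j → |dotp (fun r => A r i) (fun r => A r j)| ≤ μ := by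
    intro i j hij
    rw [hμ]
    exact le_ciSup (f := fun p : {p : Fin n × Fin n // p.1 ≠ p.2} =>
      |dotp (fun i => A i p.1.1) (fun i => A i p.1.2)|) (Set.finite_range _).bddAbove ⟨(i, j), hij⟩
  have hself : ∀ i, dotp (fun r => A r i) (fun r => A r i) = 1 := by
    intro i
    have h := hA i
    unfold e2norm at h
    rw [Real.sqrt_eq_one] at h
    unfold dotp
    rw [← h]
    exact Finset.sum_congr rfl fun r _ => (sq _).symm
  set W := ⨆ i : Fin n, |dotp (fun r => A r i) wt| with hW
  have hWi : ∀ i, |dotp (fun r => A r i) wt| ≤ W := fun i =>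
    le_ciSup (f := fun i : Fin n => |dotp (fun r => A r i) wt|) (Set.finite_range _).bddAbove i
  have hxm : ∀ i ∈ I1, xmin ≤ |xt i| := by
    intro i hi
    rw [hxmin]
    exact ciInf_le (f := fun i : {i : Fin n // i ∈ I1} => |xt i.1|)
      (Set.finite_range _).bddBelow ⟨i, hi⟩
  set z : Fin n → ℝ := fun i => xt i - if i ∈ S then c i else 0 with hz
  have hr : ∀ r, y r - PSy r = ∑ i ∈ I1, A r i * z i + wt r := by
    intro r
    have h1 : ∑ i ∈ S, A r i * c i = ∑ i ∈ I1, A r i * (if i ∈ S then c i else 0) := by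
      rw [← Finset.sum_subset hSI]
      · exact Finset.sum_congr rfl fun i hi => by simp [hi]
      · intro i _ hi; simp [hi]
    have h2 := hxt1 r
    simp only [hz, mul_sub, Finset.sum_sub_distrib]
    rw [hc r, h1]
    linarith
  have hd : ∀ i, dotp (fun r => A r i) (fun r' => y r' - PSy r') =
      ∑ j ∈ I1, dotp (fun r => A r i) (fun r => A r j) * z j + dotp (fun r => A r i) wt := by
    intro i
    unfold dotp
    simp only [hr, mul_add, Finset.sum_add_distrib, Finset.mul_sum, Finset.sum_mul]
    rw [Finset.sum_comm]
    simp only [mul_assoc]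
  have hne : I1.Nonempty := by
    rw [← Finset.card_pos]; omega
  obtain ⟨j0, hj0, hmax⟩ := Finset.exists_max_image I1 (fun i => |z i|) hne
  set Z := |z j0| with hZ
  have hZx : xmin ≤ Z := by
    obtain ⟨t, htI, htS⟩ := Finset.exists_mem_notMem_of_card_lt_card (hcard.symm ▸ hSK : S.card < I1.card)
    refine (hxm t htI).trans ?_
    have := hmax t htI
    simpa [hz, htS] using this
  have hZ0 : 0 < Z := hxminpos.trans_le hZx
  have hsum : ∀ (i : Fin n) (T : Finset (Fin n)), T ⊆ I1 → i ∉ T →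
      |∑ j ∈ T, dotp (fun r => A r i) (fun r => A r j) * z j| ≤ T.card * (μ * Z) := by
    intro i T hT hi
    refine (Finset.abs_sum_le_sum_abs _ _).trans ?_
    rw [← nsmul_eq_mul]
    refine Finset.sum_le_card_nsmul _ _ _ fun j hj => ?_
    rw [abs_mul]
    exact mul_le_mul (hcoh i j fun h => hi (h ▸ hj)) (hmax j (hT hj)) (abs_nonneg _) hμ0
  have hlow : Z - ((K:ℝ) - 1) * (μ * Z) ≤
      |dotp (fun r => A r j0) (fun r' => y r' - PSy r')| := by
    rw [hd, hwt2 j0 hj0, add_zero, ← Finset.add_sum_erase _ _ hj0, hself, one_mul]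
    have h := hsum j0 (I1.erase j0) (Finset.erase_subset _ _) (Finset.notMem_erase _ _)
    rw [Finset.card_erase_of_mem hj0, hcard, Nat.cast_sub hK1, Nat.cast_one] at h
    have h3 := abs_sub_abs_le_abs_add (z j0)
      (∑ j ∈ I1.erase j0, dotp (fun r => A r j0) (fun r => A r j) * z j)
    linarith
  have hup : ∀ i, i ∉ I1 → |dotp (fun r => A r i) (fun r' => y r' - PSy r')| ≤
      K * (μ * Z) + W := by
    intro i hi
    rw [hd]
    refine (abs_add_le _ _).trans (add_le_add ?_ (hWi i))
    have := hsum i I1 (Finset.Subset.refl _) hi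
    rwa [hcard] at this
  have hD : 1 - (2 * (K : ℝ) - 1) * μ ≤ 1 - ((K : ℝ) - 1) * μ := by nlinarith
  have hkey : W < (1 - (2 * (K : ℝ) - 1) * μ) * Z := by
    have h1 : (1 - (2 * (K : ℝ) - 1) * μ) ^ 2 / (1 - ((K : ℝ) - 1) * μ) ≤
        1 - (2 * (K : ℝ) - 1) * μ := by
      rw [div_le_iff₀ (hcond1.trans_le hD), sq]
      exact mul_le_mul_of_nonneg_left hD hcond1.le
    have h2 := lt_of_lt_of_le hcond2 h1
    rw [div_lt_iff₀ hxminpos] at h2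
    exact h2.trans_le (mul_le_mul_of_nonneg_left hZx hcond1.le)
  have hne2 : Nonempty {i : Fin n // i ∉ I1} := by
    obtain ⟨t, _, ht⟩ := Finset.exists_mem_notMem_of_card_lt_card
      (by simpa [hcard] using hKn : I1.card < (Finset.univ : Finset (Fin n)).card)
    exact ⟨⟨t, ht⟩⟩
  have hmid : K * (μ * Z) + W < Z - ((K:ℝ) - 1) * (μ * Z) := by linarith
  refine lt_of_le_of_lt (ciSup_le fun i => hup i.1 i.2) (hmid.trans_le (hlow.trans ?_))
  exact le_ciSup (f := fun i : {i : Fin n // i ∈ I1} =>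
      |dotp (fun r => A r i.1) (fun r' => y r' - PSy r')|) (Set.finite_range _).bddAbove ⟨j0, hj0⟩
end
end

section
/- Let K be a positive integer and t > 0 a real number with 1 − 2Kt > 0. Then (1 − (2K−1)t)² / (1 − (K−1)t) > (1 − 2Kt)² / (1 − Kt). -/
/-- **The algebraic inequality underlying (24).**  For a positive integer `K` and a real
`t > 0` with `1 - 2Kt > 0`,
`(1 - (2K-1)t)² / (1 - (K-1)t) > (1 - 2Kt)² / (1 - Kt)`. -/
theorem stmt14 (K : ℕ) (hK : 0 < K) (t : ℝ) (ht : 0 < t)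
    (h : 0 < 1 - 2 * (K : ℝ) * t) :
    (1 - (2 * (K : ℝ) - 1) * t) ^ 2 / (1 - ((K : ℝ) - 1) * t) >
      (1 - 2 * (K : ℝ) * t) ^ 2 / (1 - (K : ℝ) * t) := by
  have hKt : 0 < (K : ℝ) * t := mul_pos (by exact_mod_cast hK) ht
  obtain ⟨a, ha⟩ : ∃ a : ℝ, a = 1 - 2 * (K : ℝ) * t := ⟨_, rfl⟩
  obtain ⟨b, hb⟩ : ∃ b : ℝ, b = 1 - (K : ℝ) * t := ⟨_, rfl⟩
  have e1 : 1 - (2 * (K : ℝ) - 1) * t = a + t := by rw [ha]; ring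
  have e2 : 1 - ((K : ℝ) - 1) * t = b + t := by rw [hb]; ring
  have hab : 0 < b - a := by linarith
  have ha0 : 0 < a := by linarith
  have hb0 : 0 < b := by linarith
  rw [e1, e2, ← ha, ← hb, gt_iff_lt, div_lt_div_iff₀ hb0 (by linarith)]
  have key : 0 < t * (a * b + t * b + a * (b - a)) := by positivity
  linarith [key, show (a + t) ^ 2 * b - a ^ 2 * (b + t)
    = t * (a * b + t * b + a * (b - a)) by ring]
end
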